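/- Let (p, F) be a generating pair, let θ and ψ be infinite strings over [N], and let K, L be positive integers such that θ_{K+i} = ψ_{L+i} for all i ≥ 1 and e(θ|K) = e(ψ|L). Define g = (f_{ψ_1}^{−1}∘f_{ψ_2}^{−1}∘⋯∘f_{ψ_L}^{−1}) ∘ (f_{θ_K}∘f_{θ_{K−1}}∘⋯∘f_{θ_1}). Then g is a bijective isometry of ℝ², and for every tile t ∈ T(θ) the set g(t) is a tile of T(ψ); hence the tilings T(θ) and T(ψ) are congruent. -/

import Mathlib

/-!
The patches are nested: prepending the letter `θ_{k+1}` to `σ ∈ S_{e(θ|k)}` gives a string of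
`S_{e(θ|k+1)}` with the same tile, because `f_{θ_{k+1}}⁻¹ ∘ f_{θ_{k+1}} = id`
(`patch_subset_succ`). Hence every tile of `T(θ)` lies in some `T(θ, K + j)`. There
`f_{-(θ|K+j)} = f_{-(θ|K)} ∘ f_{-τ}`, where `τ` is the block of `j` letters following `θ|K`, which
is also the block following `ψ|L`. The map `f_{θ_K} ∘ ⋯ ∘ f_{θ_1}` is the inverse of `f_{-(θ|K)}`
(`fstr_reverse_fneg`), so `g` replaces the prefix `θ|K` by `ψ|L`: it sends `t(θ, K + j, σ)` to
`t(ψ, L + j, σ)`. Since `e(θ|K) = e(ψ|L)`, the index sets `S_{e(θ|K+j)}` and `S_{e(ψ|L+j)}` agree.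
The same equality makes the ratios `s ^ e(θ|K)` and `(s ^ e(ψ|L))⁻¹` of the two factors of `g`
cancel, so `g` is an isometry.
-/

open Set

noncomputable section

abbrev Pt := EuclideanSpace ℝ (Fin 2)

/-- A similitude of the plane with scaling ratio `r`. -/
def IsSimilitude (f : Pt → Pt) (r : ℝ) : Prop :=
  Function.Bijective f ∧ ∀ x y, dist (f x) (f y) = r * dist x y

/-- `e(σ) = a_{σ₁} + ⋯ + a_{σ_k}` for a finite string `σ` over `[N]`. -/
def estr {N : ℕ} (a : Fin N → ℕ) (σ : List (Fin N)) : ℕ := (σ.map a).sum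

/-- `e⁻(σ) = e(σ) - a_{σ_k}` (the sum over all but the last letter). -/
def eminus {N : ℕ} (a : Fin N → ℕ) (σ : List (Fin N)) : ℕ := estr a σ.dropLast

/-- `f_σ = f_{σ₁} ∘ f_{σ₂} ∘ ⋯ ∘ f_{σ_k}`. -/
def fstr {N : ℕ} (f : Fin N → Pt → Pt) (σ : List (Fin N)) : Pt → Pt :=
  σ.foldr (fun i g => f i ∘ g) id

/-- `f_{-σ} = f_{σ₁}⁻¹ ∘ f_{σ₂}⁻¹ ∘ ⋯ ∘ f_{σ_k}⁻¹`. -/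
def fneg {N : ℕ} (f : Fin N → Pt → Pt) (σ : List (Fin N)) : Pt → Pt :=
  σ.foldr (fun i g => Function.invFun (f i) ∘ g) id

/-- `S_n` = nonempty finite strings `σ` with `e(σ) ≥ n > e⁻(σ)`. -/
def Sset {N : ℕ} (a : Fin N → ℕ) (n : ℕ) : Set (List (Fin N)) :=
  {σ | σ ≠ [] ∧ n ≤ estr a σ ∧ eminus a σ < n}

/-- `θ|k = θ₁θ₂⋯θ_k` (we index infinite strings from 0, so `θ|k = θ 0, …, θ (k-1)`). -/
def trunc {N : ℕ} (θ : ℕ → Fin N) (k : ℕ) : List (Fin N) :=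
  (List.range k).map θ

/-- The tile `t(θ,k,σ) = (f_{-(θ|k)} ∘ f_σ)(p)`. -/
def tile {N : ℕ} (f : Fin N → Pt → Pt) (p : Set Pt) (θ : ℕ → Fin N) (k : ℕ)
    (σ : List (Fin N)) : Set Pt :=
  (fneg f (trunc θ k) ∘ fstr f σ) '' p

/-- The patch `T(θ,k) = { t(θ,k,σ) : σ ∈ S_{e(θ|k)} }`. -/
def patch {N : ℕ} (a : Fin N → ℕ) (f : Fin N → Pt → Pt) (p : Set Pt) (θ : ℕ → Fin N)
    (k : ℕ) : Set (Set Pt) :=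
  tile f p θ k '' Sset a (estr a (trunc θ k))

/-- The tiling `T(θ) = ⋃_{k ≥ 1} T(θ,k)`. -/
def tiling {N : ℕ} (a : Fin N → ℕ) (f : Fin N → Pt → Pt) (p : Set Pt)
    (θ : ℕ → Fin N) : Set (Set Pt) :=
  ⋃ k ∈ {k : ℕ | 1 ≤ k}, patch a f p θ k

/-- Concatenation of a finite string `α` with an infinite string `θ`. -/
def cat {N : ℕ} (α : List (Fin N)) (θ : ℕ → Fin N) : ℕ → Fin N :=
  fun i => if h : i < α.length then α.get ⟨i, h⟩ else θ (i - α.length)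

/-- A generating pair `(p, F)` with data `a₁,…,a_N` and scaling number `s`. -/
structure GenPair (N : ℕ) (a : Fin N → ℕ) (s : ℝ) (p : Set Pt)
    (f : Fin N → Pt → Pt) : Prop where
  two_le : 2 ≤ N
  a_pos : ∀ n, 0 < a n
  a_gcd : Finset.univ.gcd a = 1
  s_pos : 0 < s
  s_lt_one : s < 1
  s_eq : ∑ n, s ^ (2 * a n) = 1
  p_nonempty : p.Nonempty
  p_compact : IsCompact p
  p_closure : p = closure (interior p)
  sim : ∀ n, IsSimilitude (f n) (s ^ a n)
  cover : p = ⋃ n, f n '' p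
  disj : ∀ m n, m ≠ n → interior (f m '' p) ∩ interior (f n '' p) = ∅

section helpers

variable {N : ℕ} {a : Fin N → ℕ} {s : ℝ} {p : Set Pt} {f : Fin N → Pt → Pt}

lemma estr_append (σ τ : List (Fin N)) : estr a (σ ++ τ) = estr a σ + estr a τ := by
  simp [estr]

lemma estr_reverse (σ : List (Fin N)) : estr a σ.reverse = estr a σ := by
  simp [estr, List.sum_reverse]

lemma fstr_append (σ τ : List (Fin N)) : fstr f (σ ++ τ) = fstr f σ ∘ fstr f τ := by
  induction σ with
  | nil => rfl
  | cons i σ ih =>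
    change f i ∘ fstr f (σ ++ τ) = f i ∘ fstr f σ ∘ fstr f τ
    rw [ih]

lemma fneg_append (σ τ : List (Fin N)) : fneg f (σ ++ τ) = fneg f σ ∘ fneg f τ := by
  induction σ with
  | nil => rfl
  | cons i σ ih =>
    change Function.invFun (f i) ∘ fneg f (σ ++ τ) = Function.invFun (f i) ∘ fneg f σ ∘ fneg f τ
    rw [ih]

lemma trunc_add (θ : ℕ → Fin N) (K j : ℕ) :
    trunc θ (K + j) = trunc θ K ++ trunc (fun i => θ (K + i)) j := by
  simp [trunc, List.range_add, Function.comp_def]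

lemma isSimilitude_fstr (hGP : GenPair N a s p f) (σ : List (Fin N)) :
    IsSimilitude (fstr f σ) (s ^ estr a σ) := by
  induction σ with
  | nil => exact ⟨Function.bijective_id, fun x y => by simp [fstr, estr]⟩
  | cons i σ ih =>
    refine ⟨(hGP.sim i).1.comp ih.1, fun x y => ?_⟩
    change dist (f i (fstr f σ x)) (f i (fstr f σ y)) = _
    rw [(hGP.sim i).2, ih.2]
    simp [estr, pow_add, mul_assoc]

lemma fstr_reverse_fneg (hGP : GenPair N a s p f) (σ : List (Fin N)) (x : Pt) :
    fstr f σ.reverse (fneg f σ x) = x := by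
  induction σ with
  | nil => rfl
  | cons i σ ih =>
    rw [List.reverse_cons, fstr_append]
    change fstr f σ.reverse (f i (Function.invFun (f i) (fneg f σ x))) = x
    rw [Function.rightInverse_invFun (hGP.sim i).1.2, ih]

lemma isSimilitude_fneg (hGP : GenPair N a s p f) (σ : List (Fin N)) :
    IsSimilitude (fneg f σ) (s ^ estr a σ)⁻¹ := by
  have hsim := isSimilitude_fstr hGP σ.reverse
  have hinv : Function.LeftInverse (fstr f σ.reverse) (fneg f σ) := fstr_reverse_fneg hGP σ
  refine ⟨⟨hinv.injective, fun x => ?_⟩, fun x y => ?_⟩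
  · exact ⟨fstr f σ.reverse x, hsim.1.1 (hinv _)⟩
  · have h := hsim.2 (fneg f σ x) (fneg f σ y)
    rw [hinv, hinv, estr_reverse] at h
    rw [h, inv_mul_cancel_left₀ (pow_pos hGP.s_pos _).ne']

lemma patch_subset_succ (hGP : GenPair N a s p f) (θ : ℕ → Fin N) (k : ℕ) :
    patch a f p θ k ⊆ patch a f p θ (k + 1) := by
  rintro _ ⟨σ, ⟨hne, hle, hlt⟩, rfl⟩
  have htr : trunc θ (k + 1) = trunc θ k ++ [θ k] := by
    simp [trunc, List.range_succ]
  refine ⟨θ k :: σ, ⟨by simp, ?_, ?_⟩, ?_⟩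
  · rw [htr, estr_append, add_comm]
    simpa [estr] using hle
  · rw [htr, estr_append, add_comm]
    rw [eminus, List.dropLast_cons_of_ne_nil hne]
    simpa [estr, eminus] using hlt
  · unfold tile
    congr 1
    rw [htr, fneg_append]
    funext x
    change fneg f (trunc θ k) (Function.invFun (f (θ k)) (f (θ k) (fstr f σ x))) = _
    rw [Function.leftInverse_invFun (hGP.sim (θ k)).1.1]
    rfl

lemma patch_mono (hGP : GenPair N a s p f) (θ : ℕ → Fin N) : Monotone (patch a f p θ) :=
  monotone_nat_of_le_succ (patch_subset_succ hGP θ)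

end helpers

/-- if `θ` and `ψ` share the same tail, with `θ_{K+i} = ψ_{L+i}` for all
`i ≥ 1` and `e(θ|K) = e(ψ|L)`, then
`g = (f_{ψ₁}⁻¹∘⋯∘f_{ψ_L}⁻¹) ∘ (f_{θ_K}∘⋯∘f_{θ₁})` is a bijective isometry taking each
tile of `T(θ)` to a tile of `T(ψ)`; hence `T(θ)` and `T(ψ)` are congruent.
(Infinite strings are indexed from 0, so `θ_{K+i} = θ (K+i-1)`.) -/
theorem stmt_12 (N : ℕ) (a : Fin N → ℕ) (s : ℝ) (p : Set Pt) (f : Fin N → Pt → Pt)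
    (hGP : GenPair N a s p f) (θ ψ : ℕ → Fin N) (K L : ℕ) (hK : 1 ≤ K) (hL : 1 ≤ L)
    (htail : ∀ i : ℕ, θ (K + i) = ψ (L + i))
    (he : estr a (trunc θ K) = estr a (trunc ψ L)) :
    Function.Bijective (fneg f (trunc ψ L) ∘ fstr f (trunc θ K).reverse) ∧
      Isometry (fneg f (trunc ψ L) ∘ fstr f (trunc θ K).reverse) ∧
      ∀ t ∈ tiling a f p θ,
        (fneg f (trunc ψ L) ∘ fstr f (trunc θ K).reverse) '' t ∈ tiling a f p ψ := by
  have h1 := isSimilitude_fneg hGP (trunc ψ L)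
  have h2 := isSimilitude_fstr hGP (trunc θ K).reverse
  refine ⟨h1.1.comp h2.1, Isometry.of_dist_eq fun x y => ?_, fun t ht => ?_⟩
  · rw [Function.comp_apply, Function.comp_apply, h1.2, h2.2, estr_reverse, he,
      inv_mul_cancel_left₀ (pow_pos hGP.s_pos _).ne']
  · simp only [tiling, mem_iUnion, mem_ofPred_eq] at ht ⊢
    obtain ⟨k, -, ht⟩ := ht
    -- By nestedness the tile may be taken at a level `K + k`, beyond the prefix `θ|K`.
    obtain ⟨σ, hσ, rfl⟩ := patch_mono hGP θ (Nat.le_add_left k K) ht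
    have hτ : (fun i => θ (K + i)) = fun i => ψ (L + i) := funext htail
    refine ⟨L + k, by omega, σ, ?_, ?_⟩
    · rwa [trunc_add, estr_append, ← he, ← hτ, ← estr_append, ← trunc_add]
    · unfold tile
      rw [← image_comp, trunc_add, trunc_add, fneg_append, fneg_append, hτ]
      congr 1
      funext x
      simp only [Function.comp_apply, fstr_reverse_fneg hGP]
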